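/- Let d>0 be an arbitrary real. There exist constants D>0, ℓ>0 and C>0 such that the following holds with high probability over the choice of G=(V,E)∼G(n,d/n): letting U be the set of vertices of G of degree at most D, every connected component of the induced subgraph G[V∖U] has at most C·log n vertices and tree-excess at most ℓ. -/

import Mathlib

/-!
Choose `M` and `l` large in terms of `d`, and let `D = 2 M`, `K = ⌊2 log n⌋`. The statement is a
first moment argument over vertex sets `S`, driven by the numbers of edges inside `S` and of edges
touching `S`.

* A component of `G[V ∖ U]` with more than `2 log n` vertices contains, by growing it one vertex at
  a time, a set `S` of exactly `K` vertices spanning at least `K - 1` edges. All degrees in `S`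
  exceed `2 M`, so at least `M K` edges touch `S` (`bad_set_of_not_good`).
* A component with `k ≤ K` vertices and excess larger than `l` is a set of `k` vertices spanning at
  least `k + l` edges.

For a fixed `S` of size `k`, Markov's inequality applied to
`(n / k) ^ #(edges inside S) * e ^ #(edges touching S)` (`prob_set_le`) shows that `S` spans `a`
edges and is touched by `b` edges with probability at most `(k / n) ^ a * e ^ (-b) * e ^ (2 d e k)`:
the expectation is a product over all pairs by independence (`sum_erWeight_mul_prod`). Using the
base `n / k` for the inner edges replaces any enumeration of spanning trees. Since
`(n choose k) * (k / n) ^ k ≤ e ^ k`, a union bound over `S` gives `n * e ^ (-K)` for the first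
kind of set once `M ≥ 2 + 2 d e` (`prob_large_le`), and `(k / n) ^ l * e ^ ((1 + 2 d e) k)` for the
second kind (`prob_dense_le`); the latter, summed over `k ≤ 2 log n`, is at most
`(2 log n) ^ (l + 1) / n` once `l ≥ 2 (1 + 2 d e) + 1`. Both tend to `0`.
-/


open Classical Filter

/-- The degree of a vertex. -/
noncomputable def deg {V : Type*} (G : SimpleGraph V) (v : V) : ℕ :=
  Nat.card {u : V // G.Adj v u}

/-- The number of edges of a graph. -/
noncomputable def edgeCount {V : Type*} (G : SimpleGraph V) : ℕ :=
  Nat.card G.edgeSet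

/-- The probability that the Erdős–Rényi random graph `G(n,p)` satisfies property `P`:
each of the `n(n-1)/2` possible edges is present independently with probability `p`. -/
noncomputable def erProb (n : ℕ) (p : ℝ) (P : SimpleGraph (Fin n) → Prop) : ℝ :=
  ∑ G : SimpleGraph (Fin n),
    (if P G then p ^ edgeCount G * (1 - p) ^ (n.choose 2 - edgeCount G) else 0)

/-- The number of edges of `G` with all endpoints inside `S`. -/
noncomputable def edgesWithin {V : Type*} (G : SimpleGraph V) (S : Set V) : ℕ :=
  Nat.card {e : Sym2 V // e ∈ G.edgeSet ∧ ∀ x ∈ e, x ∈ S}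

/-! ### Moment generating functions of edge counts -/

/-- The edge set of a graph on `Fin n`, as a finset. -/
noncomputable def edges {n : ℕ} (G : SimpleGraph (Fin n)) : Finset (Sym2 (Fin n)) :=
  Finset.univ.filter (fun e => e ∈ G.edgeSet)

/-- The probability mass of a single graph under `G(n,p)`. -/
noncomputable def erWeight (n : ℕ) (p : ℝ) (G : SimpleGraph (Fin n)) : ℝ :=
  p ^ edgeCount G * (1 - p) ^ (n.choose 2 - edgeCount G)

/-- The edges of `G` with both endpoints in `S`. -/
noncomputable def inEdges {n : ℕ} (G : SimpleGraph (Fin n)) (S : Finset (Fin n)) :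
    Finset (Sym2 (Fin n)) :=
  (edges G).filter (fun e => ∀ x ∈ e, x ∈ S)

/-- The edges of `G` with at least one endpoint in `S`. -/
noncomputable def touchEdges {n : ℕ} (G : SimpleGraph (Fin n)) (S : Finset (Fin n)) :
    Finset (Sym2 (Fin n)) :=
  (edges G).filter (fun e => ∃ x ∈ e, x ∈ S)

lemma mem_edges {n : ℕ} (G : SimpleGraph (Fin n)) (e : Sym2 (Fin n)) :
    e ∈ edges G ↔ e ∈ G.edgeSet := by simp [edges]

lemma edgeCount_eq {n : ℕ} (G : SimpleGraph (Fin n)) : edgeCount G = (edges G).card := by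
  unfold edgeCount edges
  rw [Nat.card_eq_fintype_card, Fintype.card_subtype]

lemma card_edges_top (n : ℕ) : (edges (⊤ : SimpleGraph (Fin n))).card = n.choose 2 := by
  have h := SimpleGraph.card_edgeFinset_top_eq_card_choose_two (V := Fin n)
  rw [Fintype.card_fin] at h
  rw [← h]
  congr 1
  ext e
  rw [mem_edges, SimpleGraph.mem_edgeFinset]

lemma edges_subset_top {n : ℕ} (G : SimpleGraph (Fin n)) : edges G ⊆ edges ⊤ := by
  intro e
  rw [mem_edges, mem_edges]
  exact fun h => SimpleGraph.edgeSet_mono le_top h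

lemma edges_fromEdgeSet {n : ℕ} (t : Finset (Sym2 (Fin n))) (ht : t ⊆ edges ⊤) :
    edges (SimpleGraph.fromEdgeSet (t : Set (Sym2 (Fin n)))) = t := by
  ext e
  rw [mem_edges, SimpleGraph.edgeSet_fromEdgeSet]
  constructor
  · exact fun h => h.1
  · intro h
    refine ⟨h, ?_⟩
    have := ht h
    rw [mem_edges] at this
    intro hd
    exact SimpleGraph.not_isDiag_of_mem_edgeSet _ this hd

/-- Independence of the edges: the expectation of a product of edge weights factorises. -/
lemma sum_erWeight_mul_prod (n : ℕ) (p : ℝ) (w : Sym2 (Fin n) → ℝ) :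
    ∑ G : SimpleGraph (Fin n), erWeight n p G * ∏ e ∈ edges G, w e
      = ∏ e ∈ edges (⊤ : SimpleGraph (Fin n)), (p * w e + (1 - p)) := by
  rw [Finset.prod_add]
  refine Finset.sum_bij' (fun G _ => edges G)
    (fun t _ => SimpleGraph.fromEdgeSet (t : Set (Sym2 (Fin n)))) ?_ ?_ ?_ ?_ ?_
  · intro G _
    exact Finset.mem_powerset.2 (edges_subset_top G)
  · intro t _
    exact Finset.mem_univ _
  · intro G _
    have : ((edges G : Finset _) : Set (Sym2 (Fin n))) = G.edgeSet := by
      ext e; simp [mem_edges]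
    simp only [this, SimpleGraph.fromEdgeSet_edgeSet]
  · intro t ht
    exact edges_fromEdgeSet t (Finset.mem_powerset.1 ht)
  · intro G _
    rw [Finset.prod_mul_distrib, Finset.prod_const, Finset.prod_const,
      Finset.card_sdiff_of_subset (edges_subset_top G), card_edges_top, erWeight, edgeCount_eq]
    ring

lemma sum_erWeight (n : ℕ) (p : ℝ) : ∑ G : SimpleGraph (Fin n), erWeight n p G = 1 := by
  have h := sum_erWeight_mul_prod n p (fun _ => 1)
  simpa using h

lemma erWeight_nonneg {n : ℕ} {p : ℝ} (h0 : 0 ≤ p) (h1 : p ≤ 1) (G : SimpleGraph (Fin n)) :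
    0 ≤ erWeight n p G :=
  mul_nonneg (pow_nonneg h0 _) (pow_nonneg (sub_nonneg.2 h1) _)

lemma erProb_eq (n : ℕ) (p : ℝ) (P : SimpleGraph (Fin n) → Prop) :
    erProb n p P = ∑ G : SimpleGraph (Fin n), (if P G then erWeight n p G else 0) := rfl

lemma erProb_le_one {n : ℕ} {p : ℝ} (h0 : 0 ≤ p) (h1 : p ≤ 1) (P : SimpleGraph (Fin n) → Prop) :
    erProb n p P ≤ 1 := by
  rw [erProb_eq, ← sum_erWeight n p]
  refine Finset.sum_le_sum fun G _ => ?_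
  have := erWeight_nonneg h0 h1 G
  split_ifs <;> linarith

lemma prod_touch_in {n : ℕ} (G : SimpleGraph (Fin n)) (S : Finset (Fin n)) (x y : ℝ) :
    ∏ e ∈ edges G, ((if ∀ v ∈ e, v ∈ S then x else 1) * (if ∃ v ∈ e, v ∈ S then y else 1))
      = x ^ (inEdges G S).card * y ^ (touchEdges G S).card := by
  rw [Finset.prod_mul_distrib, ← Finset.prod_filter, ← Finset.prod_filter, Finset.prod_const,
    Finset.prod_const]
  rfl

lemma card_inEdges_le {n : ℕ} (G : SimpleGraph (Fin n)) (S : Finset (Fin n)) :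
    (inEdges G S).card ≤ S.card * S.card := by
  have : inEdges G S ⊆ (S ×ˢ S).image (fun q => s(q.1, q.2)) := by
    intro e
    induction e with
    | _ a b =>
      intro h
      have h2 := (Finset.mem_filter.1 h).2
      exact Finset.mem_image.2 ⟨(a, b), by simp [h2 a (by simp), h2 b (by simp)], rfl⟩
  calc _ ≤ _ := Finset.card_le_card this
    _ ≤ _ := Finset.card_image_le
    _ = _ := Finset.card_product _ _

lemma card_touchEdges_le {n : ℕ} (G : SimpleGraph (Fin n)) (S : Finset (Fin n)) :
    (touchEdges G S).card ≤ S.card * n := by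
  have : touchEdges G S ⊆ (S ×ˢ (Finset.univ : Finset (Fin n))).image (fun q => s(q.1, q.2)) := by
    intro e h
    obtain ⟨v, hv, hS⟩ := (Finset.mem_filter.1 h).2
    obtain ⟨u, rfl⟩ := Sym2.mem_iff_exists.1 hv
    exact Finset.mem_image.2 ⟨(v, u), by simp [hS], rfl⟩
  calc _ ≤ _ := Finset.card_le_card this
    _ ≤ _ := Finset.card_image_le
    _ = _ := by rw [Finset.card_product, Finset.card_univ, Fintype.card_fin]

/-- The joint exponential moment of the number of edges inside `S` and the number of edges
touching `S`, with base `n / |S|` for the former and `exp 1` for the latter. -/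
lemma exp_moment_le {n : ℕ} {d : ℝ} (hd : 0 < d) (S : Finset (Fin n))
    (hS : S.Nonempty) (hdn : d / n ≤ 1) :
    ∑ G : SimpleGraph (Fin n), erWeight n (d / n) G *
        (((n : ℝ) / S.card) ^ (inEdges G S).card * Real.exp 1 ^ (touchEdges G S).card)
      ≤ Real.exp (2 * d * Real.exp 1 * S.card) := by
  have hk : 0 < (S.card : ℝ) := by exact_mod_cast hS.card_pos
  have hkn : (S.card : ℝ) ≤ n := by
    have := S.card_le_univ
    rw [Fintype.card_fin] at this
    exact_mod_cast this
  have hn : 0 < (n : ℝ) := hk.trans_le hkn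
  set x : ℝ := (n : ℝ) / S.card with hx
  set y : ℝ := Real.exp 1 with hy
  have hy1 : 1 ≤ y := Real.one_le_exp zero_le_one
  have hx0 : 0 < x := by positivity
  set w : Sym2 (Fin n) → ℝ :=
    fun e => (if ∀ v ∈ e, v ∈ S then x else 1) * (if ∃ v ∈ e, v ∈ S then y else 1) with hw
  have hp0 : 0 ≤ d / n := by positivity
  have h1 : ∀ e, w e - 1 ≤
      (if ∀ v ∈ e, v ∈ S then x * y else 0) + (if ∃ v ∈ e, v ∈ S then y else 0) := by
    intro e
    have hxy : 0 < x * y := by positivity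
    simp only [hw]
    split_ifs with h2 h3 h3
    · linarith
    · exfalso
      induction e with
      | _ a b => exact h3 ⟨a, by simp, h2 a (by simp)⟩
    · linarith
    · linarith
  have h2 : ∑ e ∈ edges (⊤ : SimpleGraph (Fin n)), (w e - 1) ≤ 2 * y * S.card * n := by
    calc _ ≤ _ := Finset.sum_le_sum fun e _ => h1 e
      _ = (inEdges ⊤ S).card * (x * y) + (touchEdges ⊤ S).card * y := by
        rw [Finset.sum_add_distrib, ← Finset.sum_filter, ← Finset.sum_filter, Finset.sum_const,
          Finset.sum_const, nsmul_eq_mul, nsmul_eq_mul]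
        rfl
      _ ≤ ((S.card : ℝ) * S.card) * (x * y) + ((S.card : ℝ) * n) * y := by
        gcongr
        · exact_mod_cast card_inEdges_le ⊤ S
        · exact_mod_cast card_touchEdges_le ⊤ S
      _ = 2 * y * S.card * n := by
        rw [hx]; field_simp; ring
  calc _ = ∑ G : SimpleGraph (Fin n), erWeight n (d / n) G * ∏ e ∈ edges G, w e := by
        refine Finset.sum_congr rfl fun G _ => ?_
        rw [prod_touch_in]
    _ = _ := sum_erWeight_mul_prod n _ w
    _ ≤ ∏ e ∈ edges (⊤ : SimpleGraph (Fin n)), Real.exp (d / n * (w e - 1)) := by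
        refine Finset.prod_le_prod ?_ ?_
        · intro e _
          have : 0 ≤ w e := by simp only [hw]; positivity
          have := mul_nonneg hp0 this
          linarith
        · intro e _
          have := Real.add_one_le_exp (d / n * (w e - 1))
          linarith
    _ = Real.exp (d / n * ∑ e ∈ edges (⊤ : SimpleGraph (Fin n)), (w e - 1)) := by
        rw [← Real.exp_sum, Finset.mul_sum]
    _ ≤ Real.exp (d / n * (2 * y * S.card * n)) := by gcongr
    _ = _ := by
        congr 1
        field_simp

/-- Chernoff bound for a fixed vertex set. -/
lemma prob_set_le {n : ℕ} {d : ℝ} (hd : 0 < d) (S : Finset (Fin n))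
    (hS : S.Nonempty) (hdn : d / n ≤ 1) (a b : ℕ) :
    erProb n (d / n) (fun G => a ≤ (inEdges G S).card ∧ b ≤ (touchEdges G S).card)
      ≤ ((S.card : ℝ) / n) ^ a * Real.exp (-b) * Real.exp (2 * d * Real.exp 1 * S.card) := by
  have hk : 0 < (S.card : ℝ) := by exact_mod_cast hS.card_pos
  have hkn : (S.card : ℝ) ≤ n := by
    have := S.card_le_univ
    rw [Fintype.card_fin] at this
    exact_mod_cast this
  have hn : 0 < (n : ℝ) := hk.trans_le hkn
  have hp0 : 0 ≤ d / n := by positivity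
  refine le_trans ?_ (mul_le_mul_of_nonneg_left (exp_moment_le hd S hS hdn) (by positivity))
  rw [erProb_eq, Finset.mul_sum]
  refine Finset.sum_le_sum fun G _ => ?_
  have hw := erWeight_nonneg hp0 hdn G
  split_ifs with h
  · have hx : 1 ≤ (n : ℝ) / S.card := (one_le_div hk).2 hkn
    have h1 : 1 ≤ ((S.card : ℝ) / n) ^ a * ((n : ℝ) / S.card) ^ (inEdges G S).card := by
      calc (1 : ℝ) = ((S.card : ℝ) / n) ^ a * ((n : ℝ) / S.card) ^ a := by
            rw [← mul_pow]; field_simp; simp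
        _ ≤ _ := by gcongr; exact h.1
    have h2 : 1 ≤ Real.exp (-b) * Real.exp 1 ^ (touchEdges G S).card := by
      rw [← Real.exp_nat_mul, ← Real.exp_add]
      apply Real.one_le_exp
      have : (b : ℝ) ≤ (touchEdges G S).card := by exact_mod_cast h.2
      linarith
    have h3 := one_le_mul_of_one_le_of_one_le h1 h2
    calc erWeight n (d / n) G = 1 * erWeight n (d / n) G := by ring
      _ ≤ _ := mul_le_mul_of_nonneg_right h3 hw
      _ = _ := by ring
  · positivity

/-! ### Union bounds -/

lemma erProb_exists_le {n : ℕ} {p : ℝ} (h0 : 0 ≤ p) (h1 : p ≤ 1) {ι : Type*} (s : Finset ι)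
    (P : ι → SimpleGraph (Fin n) → Prop) :
    erProb n p (fun G => ∃ i ∈ s, P i G) ≤ ∑ i ∈ s, erProb n p (P i) := by
  simp only [erProb_eq]
  rw [Finset.sum_comm]
  refine Finset.sum_le_sum fun G _ => ?_
  have hw := erWeight_nonneg h0 h1 G
  have hnn : ∀ i ∈ s, 0 ≤ (if P i G then erWeight n p G else 0) := by
    intro i _
    split_ifs
    exacts [hw, le_rfl]
  split_ifs with h
  · obtain ⟨i, hi, hP⟩ := h
    have := Finset.single_le_sum hnn hi
    rwa [if_pos hP] at this
  · exact Finset.sum_nonneg hnn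

lemma choose_mul_pow_le (n k : ℕ) (hn : 0 < n) :
    (n.choose k : ℝ) * ((k : ℝ) / n) ^ k ≤ Real.exp k := by
  have hn' : (0 : ℝ) < n := by exact_mod_cast hn
  calc (n.choose k : ℝ) * ((k : ℝ) / n) ^ k
      ≤ ((n : ℝ) ^ k / k.factorial) * ((k : ℝ) / n) ^ k := by
        gcongr
        exact Nat.choose_le_pow_div k n
    _ = (k : ℝ) ^ k / k.factorial := by
        rw [div_pow]; field_simp
    _ ≤ _ := Real.pow_div_factorial_le_exp _ (Nat.cast_nonneg k) k

/-- Union bound over the `k`-sets that span at least `a` edges and touch at least `b` edges. -/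
lemma prob_exists_set_le {n : ℕ} {d : ℝ} (hd : 0 < d) (hn : 0 < n) (hdn : d / n ≤ 1)
    (k a b : ℕ) (hk : 0 < k) :
    erProb n (d / n) (fun G => ∃ S ∈ Finset.powersetCard k (Finset.univ : Finset (Fin n)),
        a ≤ (inEdges G S).card ∧ b ≤ (touchEdges G S).card)
      ≤ (n.choose k : ℝ) *
        (((k : ℝ) / n) ^ a * Real.exp (-b) * Real.exp (2 * d * Real.exp 1 * k)) := by
  refine (erProb_exists_le (by positivity) hdn _ _).trans ?_
  calc _ ≤ ∑ S ∈ Finset.powersetCard k (Finset.univ : Finset (Fin n)),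
        (((k : ℝ) / n) ^ a * Real.exp (-b) * Real.exp (2 * d * Real.exp 1 * k)) := by
        refine Finset.sum_le_sum fun S hS => ?_
        have hc := (Finset.mem_powersetCard.1 hS).2
        have := prob_set_le hd S (Finset.card_pos.1 (by omega)) hdn a b
        rwa [hc] at this
    _ = _ := by
        rw [Finset.sum_const, Finset.card_powersetCard, Finset.card_univ, Fintype.card_fin,
          nsmul_eq_mul]

/-- A `k`-set spanning `k - 1` edges and touching `M k` edges is exponentially unlikely in `k`. -/
lemma prob_large_le {n : ℕ} {d : ℝ} (hd : 0 < d) (hn : 0 < n) (hdn : d / n ≤ 1)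
    (k M : ℕ) (hk : 0 < k) (hM : 2 + 2 * d * Real.exp 1 ≤ M) :
    erProb n (d / n) (fun G => ∃ S ∈ Finset.powersetCard k (Finset.univ : Finset (Fin n)),
        k - 1 ≤ (inEdges G S).card ∧ M * k ≤ (touchEdges G S).card) ≤ n * Real.exp (-k) := by
  refine (prob_exists_set_le hd hn hdn k (k - 1) (M * k) hk).trans ?_
  have hn' : (0 : ℝ) < n := by exact_mod_cast hn
  have hk' : (1 : ℝ) ≤ k := by exact_mod_cast hk
  have h1 : ((k : ℝ) / n) ^ (k - 1) ≤ n * ((k : ℝ) / n) ^ k := by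
    obtain ⟨j, rfl⟩ : ∃ j, k = j + 1 := ⟨k - 1, by omega⟩
    rw [Nat.add_sub_cancel, pow_succ]
    have : (0 : ℝ) ≤ (((j + 1 : ℕ) : ℝ) / n) ^ j := by positivity
    calc _ ≤ (((j + 1 : ℕ) : ℝ) / n) ^ j * ((j + 1 : ℕ) : ℝ) := le_mul_of_one_le_right this hk'
      _ = _ := by field_simp
  have h2 := choose_mul_pow_le n k hn
  calc _ ≤ (n.choose k : ℝ) *
        (n * ((k : ℝ) / n) ^ k * Real.exp (-(M * k : ℕ)) * Real.exp (2 * d * Real.exp 1 * k)) := by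
        gcongr
    _ = n * (((n.choose k : ℝ) * ((k : ℝ) / n) ^ k) *
        (Real.exp (-(M * k : ℕ)) * Real.exp (2 * d * Real.exp 1 * k))) := by ring
    _ ≤ n * (Real.exp k * (Real.exp (-(M * k : ℕ)) * Real.exp (2 * d * Real.exp 1 * k))) := by
        gcongr
    _ = n * Real.exp (k * (1 + 2 * d * Real.exp 1 - M)) := by
        rw [← Real.exp_add, ← Real.exp_add]
        congr 2
        push_cast
        ring
    _ ≤ _ := by
        gcongr
        nlinarith

/-- A `k`-set spanning `k + ℓ` edges is unlikely, polynomially in `n` with exponent `ℓ`. -/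
lemma prob_dense_le {n : ℕ} {d : ℝ} (hd : 0 < d) (hn : 0 < n) (hdn : d / n ≤ 1)
    (k l : ℕ) (hk : 0 < k) :
    erProb n (d / n) (fun G => ∃ S ∈ Finset.powersetCard k (Finset.univ : Finset (Fin n)),
        k + l ≤ (inEdges G S).card)
      ≤ ((k : ℝ) / n) ^ l * Real.exp ((1 + 2 * d * Real.exp 1) * k) := by
  have h := prob_exists_set_le hd hn hdn k (k + l) 0 hk
  simp only [Nat.zero_le, and_true] at h
  refine h.trans ?_
  have h2 := choose_mul_pow_le n k hn
  calc _ = ((n.choose k : ℝ) * ((k : ℝ) / n) ^ k) * ((k : ℝ) / n) ^ l *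
        Real.exp (2 * d * Real.exp 1 * k) := by
        rw [pow_add]; simp; ring
    _ ≤ Real.exp k * ((k : ℝ) / n) ^ l * Real.exp (2 * d * Real.exp 1 * k) := by gcongr
    _ = ((k : ℝ) / n) ^ l * (Real.exp k * Real.exp (2 * d * Real.exp 1 * k)) := by ring
    _ = _ := by
        rw [← Real.exp_add]
        congr 2
        ring

/-! ### Components of an induced subgraph -/

/-- Double counting: `M |S|` edges touch `S` when all degrees in `S` are at least `2 M`. -/
lemma mul_card_le_touchEdges {n : ℕ} (G : SimpleGraph (Fin n)) (S : Finset (Fin n)) (M : ℕ)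
    (h : ∀ v ∈ S, 2 * M ≤ deg G v) : M * S.card ≤ (touchEdges G S).card := by
  have h1 : ∀ v ∈ S, deg G v =
      (Finset.bipartiteAbove (fun v e => v ∈ e) (touchEdges G S) v).card := by
    intro v hv
    have e1 : deg G v = G.degree v := by
      unfold deg
      rw [← SimpleGraph.card_neighborSet_eq_degree, Nat.card_eq_fintype_card]
      exact Fintype.card_congr (Equiv.refl _)
    rw [e1, ← SimpleGraph.card_incidenceFinset_eq_degree]
    congr 1
    ext e
    rw [SimpleGraph.mem_incidenceFinset, Finset.mem_bipartiteAbove, touchEdges, Finset.mem_filter,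
      mem_edges]
    exact ⟨fun h => ⟨⟨h.1, v, h.2, hv⟩, h.2⟩, fun h => ⟨h.1.1, h.2⟩⟩
  have h2 : ∑ v ∈ S, deg G v ≤ (touchEdges G S).card * 2 := by
    rw [Finset.sum_congr rfl h1, Finset.sum_card_bipartiteAbove_eq_sum_card_bipartiteBelow,
      ← smul_eq_mul]
    refine Finset.sum_le_card_nsmul _ _ _ fun e _ => ?_
    induction e with
    | _ a b =>
      refine (Finset.card_le_card (t := {a, b}) ?_).trans Finset.card_le_two
      intro v hv
      have := (Finset.mem_bipartiteBelow _).1 hv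
      simpa using this.2
  have h3 : S.card * (2 * M) ≤ ∑ v ∈ S, deg G v := by
    rw [← smul_eq_mul]
    exact Finset.card_nsmul_le_sum _ _ _ h
  nlinarith

/-- In a connected vertex set one can grow, vertex by vertex, a subset of any smaller size `j`
that spans at least `j - 1` edges. -/
lemma exists_subset_inEdges {n : ℕ} (G : SimpleGraph (Fin n)) (X : Finset (Fin n))
    (hX : ∀ S ⊆ X, S.Nonempty → S ≠ X → ∃ u ∈ S, ∃ v ∈ X, v ∉ S ∧ G.Adj u v) (j : ℕ)
    (hj : j + 1 ≤ X.card) :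
    ∃ S ⊆ X, S.card = j + 1 ∧ j ≤ (inEdges G S).card := by
  induction j with
  | zero =>
    obtain ⟨S, h1, h2⟩ := Finset.exists_subset_card_eq hj
    exact ⟨S, h1, h2, Nat.zero_le _⟩
  | succ j ih =>
    obtain ⟨S, hS, hc, hi⟩ := ih (by omega)
    obtain ⟨u, hu, v, hv, hvS, huv⟩ := hX S hS (Finset.card_pos.1 (by omega))
      (by rintro rfl; omega)
    refine ⟨insert v S, Finset.insert_subset hv hS, ?_, ?_⟩
    · rw [Finset.card_insert_of_notMem hvS, hc]
    · have hnot : s(u, v) ∉ inEdges G S := by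
        intro h
        exact hvS ((Finset.mem_filter.1 h).2 v (by simp))
      have hsub : insert s(u, v) (inEdges G S) ⊆ inEdges G (insert v S) := by
        intro e he
        rcases Finset.mem_insert.1 he with rfl | he
        · refine Finset.mem_filter.2 ⟨(mem_edges _ _).2 huv, ?_⟩
          intro x hx
          rcases Sym2.mem_iff.1 hx with rfl | rfl <;> simp [hu]
        · obtain ⟨h1, h2⟩ := Finset.mem_filter.1 he
          exact Finset.mem_filter.2 ⟨h1, fun x hx => Finset.mem_insert_of_mem (h2 x hx)⟩
      have := Finset.card_le_card hsub
      rw [Finset.card_insert_of_notMem hnot] at this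
      omega

/-- The vertex set of a component of an induced subgraph, as a finset of vertices of `G`. -/
noncomputable def compSet {n : ℕ} {G : SimpleGraph (Fin n)} {A : Set (Fin n)}
    (c : (G.induce A).ConnectedComponent) : Finset (Fin n) :=
  Finset.univ.filter (fun v => ∃ h : v ∈ A, (⟨v, h⟩ : A) ∈ c.supp)

lemma mem_compSet {n : ℕ} {G : SimpleGraph (Fin n)} {A : Set (Fin n)}
    (c : (G.induce A).ConnectedComponent) (v : Fin n) :
    v ∈ compSet c ↔ ∃ h : v ∈ A, (⟨v, h⟩ : A) ∈ c.supp := by simp [compSet]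

lemma card_compSet {n : ℕ} {G : SimpleGraph (Fin n)} {A : Set (Fin n)}
    (c : (G.induce A).ConnectedComponent) : Nat.card c.supp = (compSet c).card := by
  rw [← Nat.card_eq_finsetCard (compSet c)]
  exact Nat.card_congr
    { toFun := fun v => ⟨v.1, (mem_compSet _ _).2 ⟨v.1.2, v.2⟩⟩
      invFun := fun v => ⟨⟨v.1, ((mem_compSet _ _).1 v.2).1⟩, ((mem_compSet _ _).1 v.2).2⟩
      left_inv := fun _ => rfl
      right_inv := fun _ => rfl }

lemma edgesWithin_le {n : ℕ} {G : SimpleGraph (Fin n)} {A : Set (Fin n)}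
    (c : (G.induce A).ConnectedComponent) :
    edgesWithin (G.induce A) c.supp ≤ (inEdges G (compSet c)).card := by
  have hmem : ∀ e : {e : Sym2 A // e ∈ (G.induce A).edgeSet ∧ ∀ x ∈ e, x ∈ c.supp},
      e.1.map Subtype.val ∈ inEdges G (compSet c) := by
    rintro ⟨e, he, hc⟩
    induction e with
    | _ a b =>
      refine Finset.mem_filter.2 ⟨(mem_edges _ _).2 he, ?_⟩
      intro x hx
      obtain ⟨y, hy, rfl⟩ := Sym2.mem_map.1 hx
      exact (mem_compSet _ _).2 ⟨y.2, hc y hy⟩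
  unfold edgesWithin
  rw [← Nat.card_eq_finsetCard (inEdges G (compSet c))]
  refine Nat.card_le_card_of_injective (fun e => ⟨_, hmem e⟩) ?_
  intro e f h
  exact Subtype.ext (Sym2.map.injective Subtype.val_injective (congrArg Subtype.val h))

lemma compSet_boundary {n : ℕ} {G : SimpleGraph (Fin n)} {A : Set (Fin n)}
    (c : (G.induce A).ConnectedComponent) (S : Finset (Fin n)) (hS : S ⊆ compSet c)
    (hne : S.Nonempty) (hSc : S ≠ compSet c) :
    ∃ u ∈ S, ∃ v ∈ compSet c, v ∉ S ∧ G.Adj u v := by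
  obtain ⟨u, hu⟩ := hne
  obtain ⟨v, hv, hvS⟩ := Finset.exists_of_ssubset (hS.ssubset_of_ne hSc)
  obtain ⟨hA, huc⟩ := (mem_compSet _ _).1 (hS hu)
  obtain ⟨hB, hvc⟩ := (mem_compSet _ _).1 hv
  rw [SimpleGraph.ConnectedComponent.mem_supp_iff] at huc hvc
  obtain ⟨p⟩ := SimpleGraph.ConnectedComponent.exact (huc.trans hvc.symm)
  obtain ⟨e, -, h1, h2⟩ := p.exists_boundary_dart {x : A | (x : Fin n) ∈ S} hu hvS
  refine ⟨_, h1, _, ?_, h2, e.adj⟩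
  obtain ⟨h3, h4⟩ := (mem_compSet _ _).1 (hS h1)
  refine (mem_compSet _ _).2 ⟨e.snd.2, ?_⟩
  rw [SimpleGraph.ConnectedComponent.mem_supp_iff] at h4 ⊢
  rw [← h4]
  exact (SimpleGraph.ConnectedComponent.sound e.adj.reachable).symm

/-- A component of the graph induced on the vertices of degree larger than `2 M` that has more
than `x` vertices or excess larger than `l` yields a set of the kind bounded in `prob_large_le` or
in `prob_dense_le`, where `K = ⌊x⌋`. -/
lemma bad_set_of_not_good {n : ℕ} (G : SimpleGraph (Fin n)) (M l K : ℕ) (x : ℝ) (hK : 0 < K)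
    (hKx : (K : ℝ) ≤ x) (hxK : x < K + 1)
    (h : ¬ ∀ c : (G.induce {v : Fin n | ¬((deg G v : ℝ) ≤ (2 * M : ℕ))}).ConnectedComponent,
            (Nat.card c.supp : ℝ) ≤ x ∧
            edgesWithin (G.induce {v : Fin n | ¬((deg G v : ℝ) ≤ (2 * M : ℕ))}) c.supp + 1
              ≤ Nat.card c.supp + l) :
    (∃ S ∈ Finset.powersetCard K (Finset.univ : Finset (Fin n)),
        K - 1 ≤ (inEdges G S).card ∧ M * K ≤ (touchEdges G S).card) ∨
    ∃ k ∈ Finset.Icc 1 K, ∃ S ∈ Finset.powersetCard k (Finset.univ : Finset (Fin n)),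
        k + l ≤ (inEdges G S).card := by
  push Not at h
  obtain ⟨c, hc⟩ := h
  have hle := edgesWithin_le c
  rw [card_compSet] at hc
  by_cases hx : ((compSet c).card : ℝ) ≤ x
  · right
    have h1 := hc hx
    have hcK : (compSet c).card ≤ K := by
      have : ((compSet c).card : ℝ) < K + 1 := hx.trans_lt hxK
      have : (compSet c).card < K + 1 := by exact_mod_cast this
      omega
    have hpos : 0 < (compSet c).card := by
      obtain ⟨v, hv⟩ := c.nonempty_supp
      exact Finset.card_pos.2 ⟨v, (mem_compSet _ _).2 ⟨v.2, hv⟩⟩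
    refine ⟨(compSet c).card, Finset.mem_Icc.2 ⟨hpos, hcK⟩, compSet c,
      Finset.mem_powersetCard.2 ⟨Finset.subset_univ _, rfl⟩, by omega⟩
  · left
    have hcK : K ≤ (compSet c).card := by
      have : (K : ℝ) ≤ (compSet c).card := by linarith
      exact_mod_cast this
    obtain ⟨S, hS, hSc, hSi⟩ := exists_subset_inEdges G (compSet c) (compSet_boundary c) (K - 1)
      (by omega)
    have hSK : S.card = K := by omega
    refine ⟨S, Finset.mem_powersetCard.2 ⟨Finset.subset_univ _, hSK⟩, hSi, ?_⟩
    rw [← hSK]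
    refine mul_card_le_touchEdges G S M fun v hv => ?_
    obtain ⟨h1, -⟩ := (mem_compSet _ _).1 (hS hv)
    have h2 : ¬ ((deg G v : ℝ) ≤ (2 * M : ℕ)) := h1
    have h3 : ((2 * M : ℕ) : ℝ) < deg G v := not_le.1 h2
    exact_mod_cast h3.le

/-! ### Asymptotics -/

lemma erProb_ge {n : ℕ} {p : ℝ} (h0 : 0 ≤ p) (h1 : p ≤ 1) (P Q R : SimpleGraph (Fin n) → Prop)
    (h : ∀ G, ¬ P G → Q G ∨ R G) : 1 - (erProb n p Q + erProb n p R) ≤ erProb n p P := by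
  rw [← sum_erWeight n p, erProb_eq, erProb_eq, erProb_eq, ← Finset.sum_add_distrib,
    ← Finset.sum_sub_distrib]
  refine Finset.sum_le_sum fun G _ => ?_
  have hw := erWeight_nonneg h0 h1 G
  have := h G
  split_ifs <;> first | linarith | (exfalso; tauto)

/-- The components are as required, with `C = 2` and `D = 2 M`, up to an explicit failure
probability. -/
lemma prob_good_ge {n : ℕ} {d : ℝ} (hd : 0 < d) (hn : 3 ≤ n) (hdn : d / n ≤ 1) (M l : ℕ)
    (hM : 2 + 2 * d * Real.exp 1 ≤ M) (hl : 2 * (1 + 2 * d * Real.exp 1) + 1 ≤ l) :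
    1 - (Real.exp 1 / n + (2 * Real.log n) ^ (l + 1) / n) ≤ erProb n (d / n) (fun G =>
          ∀ c : (G.induce {v : Fin n | ¬((deg G v : ℝ) ≤ (2 * M : ℕ))}).ConnectedComponent,
            (Nat.card c.supp : ℝ) ≤ 2 * Real.log n ∧
            edgesWithin (G.induce {v : Fin n | ¬((deg G v : ℝ) ≤ (2 * M : ℕ))}) c.supp + 1
              ≤ Nat.card c.supp + l) := by
  have hn0 : 0 < n := by omega
  have hn' : (0 : ℝ) < n := by exact_mod_cast hn0
  have hlog : 1 ≤ Real.log n := by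
    rw [Real.le_log_iff_exp_le hn']
    have : (3 : ℝ) ≤ n := by exact_mod_cast hn
    linarith [Real.exp_one_lt_d9]
  have hx0 : 0 ≤ 2 * Real.log n := by linarith
  set x := 2 * Real.log n with hx
  set K := ⌊x⌋₊ with hKdef
  have hKx : (K : ℝ) ≤ x := Nat.floor_le hx0
  have hxK : x < K + 1 := Nat.lt_floor_add_one x
  have hK : 0 < K := Nat.floor_pos.2 (by linarith)
  have hp0 : 0 ≤ d / n := by positivity
  refine le_trans ?_ (erProb_ge hp0 hdn _ _ _
    (fun G h => bad_set_of_not_good G M l K x hK hKx hxK h))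
  have hexp : Real.exp x = (n : ℝ) ^ 2 := by
    rw [hx, ← Real.exp_log hn', ← Real.exp_nat_mul]
    simp
  have hA := prob_large_le hd hn0 hdn K M hK hM
  have hA' : (n : ℝ) * Real.exp (-K) ≤ Real.exp 1 / n := by
    calc (n : ℝ) * Real.exp (-K) ≤ n * Real.exp (1 - x) := by
          gcongr
          linarith
      _ = _ := by
          rw [Real.exp_sub, hexp]
          field_simp
  have hB : erProb n (d / n) (fun G => ∃ k ∈ Finset.Icc 1 K,
      ∃ S ∈ Finset.powersetCard k (Finset.univ : Finset (Fin n)), k + l ≤ (inEdges G S).card)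
      ≤ x ^ (l + 1) / n := by
    refine (erProb_exists_le hp0 hdn _ _).trans ?_
    have hc0 : 0 ≤ 1 + 2 * d * Real.exp 1 := by positivity
    have hl1 : 1 ≤ l := by
      have : (1 : ℝ) ≤ l := by linarith
      exact_mod_cast this
    have hterm : ∀ k ∈ Finset.Icc 1 K, erProb n (d / n) (fun G =>
        ∃ S ∈ Finset.powersetCard k (Finset.univ : Finset (Fin n)), k + l ≤ (inEdges G S).card)
        ≤ x ^ l / n := by
      intro k hk
      obtain ⟨hk1, hk2⟩ := Finset.mem_Icc.1 hk
      have hkx : (k : ℝ) ≤ x := le_trans (by exact_mod_cast hk2) hKx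
      refine (prob_dense_le hd hn0 hdn k l hk1).trans ?_
      have he : Real.exp ((1 + 2 * d * Real.exp 1) * k) ≤ (n : ℝ) ^ (l - 1) := by
        rw [← Real.exp_log hn', ← Real.exp_nat_mul, Real.exp_le_exp]
        push_cast [hl1]
        calc (1 + 2 * d * Real.exp 1) * k ≤ (1 + 2 * d * Real.exp 1) * x := by gcongr
          _ = (2 * (1 + 2 * d * Real.exp 1)) * Real.log n := by rw [hx]; ring
          _ ≤ _ := by gcongr; linarith
      calc _ ≤ (x / n) ^ l * (n : ℝ) ^ (l - 1) := by gcongr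
        _ = _ := by
          obtain ⟨m, rfl⟩ : ∃ m, l = m + 1 := ⟨l - 1, by omega⟩
          rw [Nat.add_sub_cancel, div_pow, pow_succ (n : ℝ)]
          field_simp
    calc _ ≤ _ := Finset.sum_le_sum hterm
      _ = K * (x ^ l / n) := by simp
      _ ≤ x * (x ^ l / n) := by gcongr
      _ = _ := by ring
  linarith

lemma tendsto_error (l : ℕ) : Tendsto (fun n : ℕ =>
    1 - (Real.exp 1 / n + (2 * Real.log n) ^ (l + 1) / n)) atTop (nhds 1) := by
  have h1 : Tendsto (fun n : ℕ => Real.exp 1 / (n : ℝ)) atTop (nhds 0) :=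
    tendsto_const_div_atTop_nhds_zero_nat _
  have h2 : Tendsto (fun n : ℕ => (2 * Real.log n) ^ (l + 1) / (n : ℝ)) atTop (nhds 0) := by
    have h := (Real.isLittleO_pow_log_id_atTop (n := l + 1)).tendsto_div_nhds_zero.comp
      (tendsto_natCast_atTop_atTop (R := ℝ))
    have h' := h.const_mul ((2 : ℝ) ^ (l + 1))
    rw [mul_zero] at h'
    refine h'.congr fun n => ?_
    simp only [Function.comp, id]
    rw [mul_pow]
    ring
  simpa using (h1.add h2).const_sub 1

/-- there are constants `D, ℓ, C > 0` such that whp over `G ∼ G(n,d/n)`,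
with `U` the set of vertices of degree at most `D`, every connected component of the
induced subgraph `G[V∖U]` has at most `C log n` vertices and tree-excess at most `ℓ`
(i.e. `#edges - #vertices + 1 ≤ ℓ`). -/
theorem stmt12 (d : ℝ) (hd : 0 < d) :
    ∃ D : ℝ, 0 < D ∧ ∃ ℓ : ℕ, 0 < ℓ ∧ ∃ C : ℝ, 0 < C ∧
      Filter.Tendsto (fun n : ℕ => erProb n (d / n) (fun G =>
          ∀ c : (G.induce {v : Fin n | ¬((deg G v : ℝ) ≤ D)}).ConnectedComponent,
            (Nat.card c.supp : ℝ) ≤ C * Real.log n ∧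
            edgesWithin (G.induce {v : Fin n | ¬((deg G v : ℝ) ≤ D)}) c.supp + 1
              ≤ Nat.card c.supp + ℓ))
        Filter.atTop (nhds 1) := by
  obtain ⟨M, hM⟩ := exists_nat_ge (2 + 2 * d * Real.exp 1)
  obtain ⟨l, hl⟩ := exists_nat_ge (2 * (1 + 2 * d * Real.exp 1) + 1)
  have hpos : 0 < d * Real.exp 1 := by positivity
  have hM0 : 0 < M := by
    have : (0 : ℝ) < M := by linarith
    exact_mod_cast this
  have hl0 : 0 < l := by
    have : (0 : ℝ) < l := by linarith
    exact_mod_cast this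
  refine ⟨(2 * M : ℕ), by exact_mod_cast (by omega : 0 < 2 * M), l, hl0, 2, two_pos, ?_⟩
  have hev : ∀ᶠ n : ℕ in atTop, 3 ≤ n ∧ d / n ≤ 1 := by
    filter_upwards [eventually_ge_atTop 3, eventually_ge_atTop ⌈d⌉₊] with n h3 hd'
    have hn' : (0 : ℝ) < n := by exact_mod_cast (by omega : 0 < n)
    exact ⟨h3, (div_le_one hn').2 (Nat.ceil_le.1 hd')⟩
  refine tendsto_of_tendsto_of_tendsto_of_le_of_le' (tendsto_error l) tendsto_const_nhds ?_ ?_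
  · filter_upwards [hev] with n hn
    exact prob_good_ge hd hn.1 hn.2 M l hM hl
  · filter_upwards [hev] with n hn
    exact erProb_le_one (by positivity) hn.2 _
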